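/- arXiv:2412.02762 — 2 statements merged into one kernel-verified Lean document; each statement's English description precedes it below -/
import Mathlib

section
/- Let 0<s<1 and 0<r<1+2s, and let v:ℝ→ℝ be a bounded measurable function with v(x) = -|x|^r for -1≤x<0 and v(x) = x^r for 0≤x≤1. Then there exist constants c₁, c₂ ∈ ℝ, depending only on r and s, such that for every x ∈ (0, 1/2], (-Δ)^s v(x) = c₁ x^{r-2s} + c₂ x^r + c_s G(x) - c_s H(x), where G(x) := x^{r-2s} ∫_{1/(2x)}^{+∞} ((t+1)^r - (t-1)^r) t^{-1-2s} dt and H(x) := ∫_{ℝ∖(-1/2,1/2)} (v(x+y) - v(x)) |y|^{-1-2s} dy. -/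
open MeasureTheory Filter Set

/-- The normalizing constant `c_s` of the fractional Laplacian. -/
noncomputable def fracLapCoef (s : ℝ) : ℝ :=
  s * (4 : ℝ) ^ s * Real.Gamma (1 / 2 + s) / (Real.sqrt Real.pi * Real.Gamma (1 - s))

/-- `HasFracLapAt s u x L` means the principal value defining `(-Δ)^s u (x)`
exists and equals `L`. -/
def HasFracLapAt (s : ℝ) (u : ℝ → ℝ) (x L : ℝ) : Prop :=
  (∀ ε : ℝ, 0 < ε →
    MeasureTheory.IntegrableOn (fun y : ℝ => (u x - u y) / |x - y| ^ (1 + 2 * s))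
      {y : ℝ | ε < |y - x|}) ∧
  Filter.Tendsto (fun ε : ℝ =>
      fracLapCoef s * ∫ y in {y : ℝ | ε < |y - x|}, (u x - u y) / |x - y| ^ (1 + 2 * s))
    (nhdsWithin 0 (Set.Ioi 0)) (nhds L)

/-- `MemCalpha α Ω f` : `f ∈ C^α(Ω)`, i.e. `f` is continuously differentiable with bounded
derivatives up to order `⌊α⌋` on `Ω`, and its `⌊α⌋`-th derivative is Hölder continuous of
exponent `α - ⌊α⌋` on `Ω`. -/
def MemCalpha (α : ℝ) (Ω : Set ℝ) (f : ℝ → ℝ) : Prop :=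
  ContDiffOn ℝ (⌊α⌋₊ : ℕ) f Ω ∧
  (∀ k : ℕ, k ≤ ⌊α⌋₊ → ∃ C : ℝ, ∀ x ∈ Ω, |iteratedDerivWithin k f Ω x| ≤ C) ∧
  ∃ C : NNReal, HolderOnWith C (α - (⌊α⌋₊ : ℝ)).toNNReal (iteratedDerivWithin ⌊α⌋₊ f Ω) Ω

open scoped Topology

/-!
Folding the principal value around `x` turns it into the integral over `(0, ∞)` of the second
difference `2 u(x) - u(x + t) - u(x - t)` divided by `t ^ (1 + 2s)`. For `t < 1/2` only the values
of `v` on `[-1, 1]` enter, where `v` is the odd power `sign y |y|^r`; by homogeneity that part is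
`x ^ (r - 2s) ∫_0^{1/(2x)} Q`, where `Q` is the folded integrand of the odd power at the point `1`.
For `t > 1` one has `Q(t) = 2 t ^ (-1-2s) - ((t + 1)^r - (t - 1)^r) t ^ (-1-2s)`, and the two terms
decay like `t ^ (-1-2s)` and `t ^ (r-2-2s)`. Hence `Q` is integrable on `(0, ∞)`, which gives
`c₁ = c_s ∫_0^∞ Q`, while the tail of `Q` beyond `1/(2x)` gives `G` and, from the pure power,
`c₂ = -c_s 2^{2s} / s`.
-/

theorem setOf_lt_abs_sub_eq_union (x ε : ℝ) :
    {y : ℝ | ε < |y - x|} = Ioi (x + ε) ∪ Iio (x - ε) := by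
  ext y
  simp only [mem_ofPred_eq, mem_union, mem_Ioi, mem_Iio, lt_abs]
  grind

section Reflection

variable {E : Type*} [NormedAddCommGroup E] {φ : ℝ → E} {x ε : ℝ}

theorem integrableOn_Ioi_comp_add_left (hφ : IntegrableOn φ {y : ℝ | ε < |y - x|}) :
    IntegrableOn (fun z => φ (x + z)) (Ioi ε) := by
  rw [setOf_lt_abs_sub_eq_union] at hφ
  simpa [Function.comp_def] using
    ((measurePreserving_add_left volume x).integrableOn_comp_preimage
      (measurableEmbedding_addLeft x)).2 hφ.left_of_union

theorem integrableOn_Ioi_comp_sub_left (hφ : IntegrableOn φ {y : ℝ | ε < |y - x|}) :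
    IntegrableOn (fun z => φ (x - z)) (Ioi ε) := by
  rw [setOf_lt_abs_sub_eq_union] at hφ
  simpa [Function.comp_def] using
    (((volume : Measure ℝ).measurePreserving_sub_left x).integrableOn_comp_preimage
      (MeasurableEquiv.subLeft x).measurableEmbedding).2 hφ.right_of_union

theorem setIntegral_lt_abs_sub_eq_integral_Ioi [NormedSpace ℝ E] (hε : 0 ≤ ε)
    (hφ : IntegrableOn φ {y : ℝ | ε < |y - x|}) :
    ∫ y in {y : ℝ | ε < |y - x|}, φ y = ∫ z in Ioi ε, (φ (x + z) + φ (x - z)) := by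
  have hright : ∫ z in Ioi ε, φ (x + z) = ∫ y in Ioi (x + ε), φ y := by
    simpa using (measurePreserving_add_left volume x).setIntegral_preimage_emb
      (measurableEmbedding_addLeft x) φ (Ioi (x + ε))
  have hleft : ∫ z in Ioi ε, φ (x - z) = ∫ y in Iio (x - ε), φ y := by
    simpa using ((volume : Measure ℝ).measurePreserving_sub_left x).setIntegral_preimage_emb
      (MeasurableEquiv.subLeft x).measurableEmbedding φ (Iio (x - ε))
  rw [integral_add (integrableOn_Ioi_comp_add_left hφ) (integrableOn_Ioi_comp_sub_left hφ),
    hright, hleft]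
  rw [setOf_lt_abs_sub_eq_union] at hφ ⊢
  have hdisj : Disjoint (Ioi (x + ε)) (Iio (x - ε)) :=
    (Iio_disjoint_Ioi_of_le (by linarith)).symm
  exact setIntegral_union hdisj measurableSet_Iio hφ.left_of_union hφ.right_of_union

theorem setIntegral_le_abs_comp_add_left [NormedSpace ℝ E] (φ : ℝ → E) (x ε : ℝ) :
    ∫ y in {y : ℝ | ε ≤ |y|}, φ (x + y) = ∫ y in {y : ℝ | ε < |y - x|}, φ y := by
  have hset : {y : ℝ | ε ≤ |y|} =ᵐ[volume] {y : ℝ | ε < |y|} := by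
    filter_upwards [volume.ae_ne ε, volume.ae_ne (-ε)] with y hy hy'
    simp only [eq_iff_iff]
    change ε ≤ |y| ↔ ε < |y|
    grind
  rw [setIntegral_congr_set hset]
  simpa using (measurePreserving_add_left volume x).setIntegral_preimage_emb
    (measurableEmbedding_addLeft x) φ {y : ℝ | ε < |y - x|}

end Reflection

/-- The integrand in `y` of the principal value defining `(-Δ)^s u (x)`. -/
noncomputable def fracLapIntegrand (s : ℝ) (u : ℝ → ℝ) (x y : ℝ) : ℝ :=
  (u x - u y) / |x - y| ^ (1 + 2 * s)

/-- The second difference of `u` at `x` with step `t`, divided by `t ^ (1 + 2s)`. For `0 < t` it is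
the sum of `fracLapIntegrand s u x` over `y = x ± t`; negative `t` are not used. -/
noncomputable def secondDiffQuot (s : ℝ) (u : ℝ → ℝ) (x t : ℝ) : ℝ :=
  (2 * u x - u (x + t) - u (x - t)) / t ^ (1 + 2 * s)

section PrincipalValue

variable {s x δ ε : ℝ} {u : ℝ → ℝ}

theorem fracLapIntegrand_add_eq_secondDiffQuot (s : ℝ) (u : ℝ → ℝ) (x : ℝ) {z : ℝ} (hz : 0 < z) :
    fracLapIntegrand s u x (x + z) + fracLapIntegrand s u x (x - z) = secondDiffQuot s u x z := by
  rw [fracLapIntegrand, fracLapIntegrand, sub_add_cancel_left, sub_sub_cancel, abs_neg,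
    abs_of_pos hz, secondDiffQuot]
  ring

theorem integrableOn_Ioi_secondDiffQuot (hε : 0 ≤ ε)
    (hfar : IntegrableOn (fracLapIntegrand s u x) {y : ℝ | ε < |y - x|}) :
    IntegrableOn (secondDiffQuot s u x) (Ioi ε) :=
  ((integrableOn_Ioi_comp_add_left hfar).add (integrableOn_Ioi_comp_sub_left hfar)).congr_fun
    (fun _ hz => fracLapIntegrand_add_eq_secondDiffQuot s u x (hε.trans_lt hz)) measurableSet_Ioi

theorem setIntegral_fracLapIntegrand_eq_integral_Ioi (hε : 0 ≤ ε)
    (hfar : IntegrableOn (fracLapIntegrand s u x) {y : ℝ | ε < |y - x|}) :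
    ∫ y in {y : ℝ | ε < |y - x|}, fracLapIntegrand s u x y =
      ∫ z in Ioi ε, secondDiffQuot s u x z := by
  rw [setIntegral_lt_abs_sub_eq_integral_Ioi hε hfar]
  exact setIntegral_congr_fun measurableSet_Ioi fun z hz =>
    fracLapIntegrand_add_eq_secondDiffQuot s u x (hε.trans_lt hz)

theorem setIntegral_sub_div_abs_rpow_eq_neg (s : ℝ) (u : ℝ → ℝ) (x δ : ℝ) :
    ∫ y in {y : ℝ | δ ≤ |y|}, (u (x + y) - u x) / |y| ^ (1 + 2 * s) =
      -∫ y in {y : ℝ | δ < |y - x|}, fracLapIntegrand s u x y := by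
  rw [← setIntegral_le_abs_comp_add_left, ← integral_neg]
  congr with y
  rw [fracLapIntegrand, sub_add_cancel_left, abs_neg]
  ring

theorem hasFracLapAt_of_integrableOn_secondDiffQuot (hδ : 0 < δ)
    (hfar : ∀ ε : ℝ, 0 < ε → IntegrableOn (fracLapIntegrand s u x) {y : ℝ | ε < |y - x|})
    (hnear : IntegrableOn (secondDiffQuot s u x) (Ioc 0 δ)) :
    HasFracLapAt s u x (fracLapCoef s * ((∫ t in (0)..δ, secondDiffQuot s u x t)
      - ∫ y in {y : ℝ | δ ≤ |y|}, (u (x + y) - u x) / |y| ^ (1 + 2 * s))) := by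
  refine ⟨hfar, Tendsto.const_mul _ ?_⟩
  have htrunc : ∀ ε > 0, (∫ t in ε..δ, secondDiffQuot s u x t)
      - (∫ y in {y : ℝ | δ ≤ |y|}, (u (x + y) - u x) / |y| ^ (1 + 2 * s)) =
        ∫ y in {y : ℝ | ε < |y - x|}, fracLapIntegrand s u x y := by
    intro ε hε
    rw [setIntegral_sub_div_abs_rpow_eq_neg, sub_neg_eq_add,
      setIntegral_fracLapIntegrand_eq_integral_Ioi hε.le (hfar ε hε),
      setIntegral_fracLapIntegrand_eq_integral_Ioi hδ.le (hfar δ hδ)]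
    exact intervalIntegral.integral_interval_add_Ioi
      (integrableOn_Ioi_secondDiffQuot hε.le (hfar ε hε))
      (integrableOn_Ioi_secondDiffQuot hδ.le (hfar δ hδ))
  have hcont : Tendsto (fun ε => ∫ t in ε..δ, secondDiffQuot s u x t) (𝓝[>] 0)
      (𝓝 (∫ t in (0)..δ, secondDiffQuot s u x t)) := by
    have hprim : ContinuousOn (fun ε => ∫ t in ε..δ, secondDiffQuot s u x t) (uIcc 0 δ) :=
      intervalIntegral.continuousOn_primitive_interval_left
        (by rwa [uIcc_of_le hδ.le, integrableOn_Icc_iff_integrableOn_Ioc])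
    refine (hprim 0 left_mem_uIcc).tendsto.mono_left (nhdsWithin_le_of_mem ?_)
    rw [uIcc_of_le hδ.le]
    exact Icc_mem_nhdsGT hδ
  refine (hcont.sub_const _).congr' ?_
  filter_upwards [self_mem_nhdsWithin] with ε hε using htrunc ε hε

end PrincipalValue

section FarField

variable {u : ℝ → ℝ} {p : ℝ}

theorem integrable_div_one_add_abs_rpow_of_bounded (hp : 1 < p)
    (hu : AEStronglyMeasurable u) {M : ℝ} (hM : ∀ y, |u y| ≤ M) :
    Integrable fun y => u y / (1 + |y|) ^ p := by
  have hweight : Integrable fun y : ℝ => (1 + ‖y‖) ^ (-p) :=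
    integrable_one_add_norm (by simpa using hp)
  refine (hweight.bdd_mul hu (.of_forall hM)).congr (.of_forall fun y => ?_)
  simp only
  rw [Real.rpow_neg (by positivity), Real.norm_eq_abs, div_eq_mul_inv]

theorem one_add_abs_le_mul_abs_sub {x y ε : ℝ} (hε : 0 < ε) (hy : ε ≤ |y - x|) :
    1 + |y| ≤ ((1 + |x|) / ε + 1) * |x - y| := by
  have htri : |y| ≤ |x| + |y - x| := by simpa using abs_add_le x (y - x)
  have hdiv : 1 + |x| ≤ (1 + |x|) / ε * |y - x| := by
    rw [div_mul_eq_mul_div, le_div_iff₀ hε]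
    gcongr
  rw [abs_sub_comm x y]
  linarith

theorem integrableOn_div_abs_sub_rpow (hp : 0 ≤ p) (hu : Integrable fun y => u y / (1 + |y|) ^ p)
    (x : ℝ) {ε : ℝ} (hε : 0 < ε) :
    IntegrableOn (fun y => u y / |x - y| ^ p) {y : ℝ | ε < |y - x|} := by
  have hmeas : MeasurableSet {y : ℝ | ε < |y - x|} :=
    measurableSet_lt measurable_const (by fun_prop)
  have hratio : ∀ y ∈ {y : ℝ | ε < |y - x|},
      ‖((1 + |y|) / |x - y|) ^ p‖ ≤ ((1 + |x|) / ε + 1) ^ p := by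
    intro y hy
    have hpos : 0 < |x - y| := abs_sub_comm x y ▸ hε.trans hy
    rw [Real.norm_of_nonneg (by positivity)]
    gcongr
    exact (div_le_iff₀ hpos).2 (one_add_abs_le_mul_abs_sub hε (le_of_lt hy))
  refine IntegrableOn.congr_fun (hu.integrableOn.bdd_mul
    (by fun_prop : Measurable fun y => ((1 + |y|) / |x - y|) ^ p).aestronglyMeasurable
    (ae_restrict_of_forall_mem hmeas hratio)) (fun y _ => ?_) hmeas
  have hone : (1 + |y|) ^ p ≠ 0 := by positivity
  rw [Real.div_rpow (by positivity) (abs_nonneg _)]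
  field_simp

theorem integrableOn_fracLapIntegrand {s : ℝ} (hs : 0 < s)
    (hu : Integrable fun y => u y / (1 + |y|) ^ (1 + 2 * s)) (x : ℝ) {ε : ℝ} (hε : 0 < ε) :
    IntegrableOn (fracLapIntegrand s u x) {y : ℝ | ε < |y - x|} := by
  have hconst : Integrable fun y : ℝ => u x / (1 + |y|) ^ (1 + 2 * s) :=
    integrable_div_one_add_abs_rpow_of_bounded (by linarith) aestronglyMeasurable_const
      fun _ => le_rfl
  have hp : 0 ≤ 1 + 2 * s := by linarith
  refine ((integrableOn_div_abs_sub_rpow hp hconst x hε).sub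
    (integrableOn_div_abs_sub_rpow hp hu x hε)).congr (.of_forall fun y => ?_)
  exact (sub_div _ _ _).symm

end FarField

section SecondDifference

variable {u : ℝ → ℝ} {x δ s : ℝ}

theorem exists_abs_second_diff_le_mul_sq (hδ : 0 < δ)
    (hu : ContDiffOn ℝ 2 u (Icc (x - δ) (x + δ))) :
    ∃ C, ∀ t ∈ Icc 0 δ, |2 * u x - u (x + t) - u (x - t)| ≤ C * t ^ 2 := by
  set h : ℝ → ℝ := fun t => 2 * u x - u (x + t) - u (x - t) with h_def
  have hcont : ContDiffOn ℝ (1 + 1) h (Icc 0 δ) := by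
    rw [one_add_one_eq_two]
    refine (contDiffOn_const.sub (hu.comp (by fun_prop) ?_)).sub (hu.comp (by fun_prop) ?_) <;>
      exact fun t ht => ⟨by linarith [ht.1, ht.2], by linarith [ht.1, ht.2]⟩
  have hzero : h 0 = 0 := by simp only [h_def, add_zero, sub_zero]; ring
  have hderiv : HasDerivAt h 0 0 := by
    have hux : HasDerivAt u (deriv u x) x :=
      ((hu.contDiffAt (Icc_mem_nhds (by linarith) (by linarith))).differentiableAt
        two_ne_zero).hasDerivAt
    have hadd := HasDerivAt.comp_const_add x 0 (by rwa [add_zero])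
    have hsub := HasDerivAt.comp_const_sub x 0 (by rwa [sub_zero])
    exact ((hadd.const_sub (2 * u x)).sub hsub).congr_deriv (by ring)
  have hderivWithin : derivWithin h (Icc 0 δ) 0 = 0 :=
    hderiv.hasDerivWithinAt.derivWithin (uniqueDiffOn_Icc hδ 0 (left_mem_Icc.2 hδ.le))
  obtain ⟨C, hC⟩ := exists_taylor_mean_remainder_bound (n := 1) hδ.le hcont
  refine ⟨C, fun t ht => ?_⟩
  simpa [taylorWithinEval_succ, hzero, hderivWithin, one_add_one_eq_two] using hC t ht

theorem integrableOn_Ioc_secondDiffQuot_of_contDiffOn (hs : s < 1) (hδ : 0 < δ)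
    (hu : ContDiffOn ℝ 2 u (Icc (x - δ) (x + δ))) :
    IntegrableOn (secondDiffQuot s u x) (Ioc 0 δ) := by
  obtain ⟨C, hC⟩ := exists_abs_second_diff_le_mul_sq hδ hu
  have hpow : IntegrableOn (fun t : ℝ => C * t ^ (1 - 2 * s)) (Ioc 0 δ) := by
    rw [← intervalIntegrable_iff_integrableOn_Ioc_of_le hδ.le]
    exact (intervalIntegral.intervalIntegrable_rpow' (by linarith)).const_mul C
  have hcont : ContinuousOn (secondDiffQuot s u x) (Ioc 0 δ) := by
    refine ContinuousOn.div ((continuousOn_const.sub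
      (hu.continuousOn.comp (by fun_prop) ?_)).sub (hu.continuousOn.comp (by fun_prop) ?_))
      (continuousOn_id.rpow_const fun t ht => .inl ht.1.ne')
      fun t ht => (Real.rpow_pos_of_pos ht.1 _).ne' <;>
      exact fun t ht => ⟨by linarith [ht.1, ht.2], by linarith [ht.1, ht.2]⟩
  refine hpow.mono' (hcont.aestronglyMeasurable measurableSet_Ioc)
    (ae_restrict_of_forall_mem measurableSet_Ioc fun t ht => ?_)
  have hpos := Real.rpow_pos_of_pos ht.1 (1 + 2 * s)
  have hsq : t ^ (1 - 2 * s) * t ^ (1 + 2 * s) = t ^ 2 := by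
    rw [← Real.rpow_add ht.1, ← Real.rpow_natCast]
    congr 1
    push_cast
    ring
  rw [secondDiffQuot, Real.norm_eq_abs, abs_div, abs_of_pos hpos, div_le_iff₀ hpos, mul_assoc,
    hsq]
  exact hC t (Ioc_subset_Icc_self ht)

theorem integrableOn_Ioc_secondDiffQuot_of_intervalIntegrable {a b : ℝ} (ha : 0 < a)
    (hu : ∀ c d, IntervalIntegrable u volume c d) :
    IntegrableOn (secondDiffQuot s u x) (Ioc a b) := by
  rcases lt_or_ge b a with hab | hab
  · rw [Ioc_eq_empty_of_le hab.le]
    exact integrableOn_empty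
  rw [← intervalIntegrable_iff_integrableOn_Ioc_of_le hab]
  have hadd : IntervalIntegrable (fun t => u (x + t)) volume a b := by
    simpa using (hu (x + a) (x + b)).comp_add_left x
  have hsub : IntervalIntegrable (fun t => u (x - t)) volume a b := by
    simpa using (hu (x - a) (x - b)).comp_sub_left x
  have hpos : ∀ t ∈ uIcc a b, 0 < t := fun t ht => ha.trans_le (uIcc_of_le hab ▸ ht).1
  have hweight : ContinuousOn (fun t : ℝ => (t ^ (1 + 2 * s))⁻¹) (uIcc a b) :=
    (continuousOn_id.rpow_const fun t ht => .inl (hpos t ht).ne').inv₀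
      fun t ht => (Real.rpow_pos_of_pos (hpos t ht) _).ne'
  exact ((intervalIntegrable_const.sub hadd).sub hsub).mul_continuousOn hweight

end SecondDifference

/-- The odd extension `sign z * |z| ^ r` of the power function, the profile of `v` on `[-1, 1]`;
it vanishes at `0` for every `r`. -/
noncomputable def oddPow (r z : ℝ) : ℝ :=
  SignType.sign z * |z| ^ r

section OddPow

variable {r z a : ℝ}

theorem oddPow_of_pos (hz : 0 < z) : oddPow r z = z ^ r := by
  rw [oddPow, sign_pos hz, abs_of_pos hz, SignType.coe_one, one_mul]

theorem oddPow_neg (r z : ℝ) : oddPow r (-z) = -oddPow r z := by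
  simp [oddPow, Left.sign_neg]

theorem oddPow_mul (ha : 0 < a) (z : ℝ) : oddPow r (a * z) = a ^ r * oddPow r z := by
  rw [oddPow, oddPow, sign_mul, sign_pos ha, one_mul, abs_mul, abs_of_pos ha,
    Real.mul_rpow ha.le (abs_nonneg z)]
  ring

theorem contDiffOn_oddPow (r : ℝ) {n : WithTop ℕ∞} : ContDiffOn ℝ n (oddPow r) (Ioi 0) :=
  (contDiffOn_id.rpow_const_of_ne fun _ hz => ne_of_gt hz).congr fun _ hz => oddPow_of_pos hz

theorem intervalIntegrable_oddPow (hr : -1 < r) (a b : ℝ) :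
    IntervalIntegrable (oddPow r) volume a b := by
  have hpos : ∀ c, 0 ≤ c → IntervalIntegrable (oddPow r) volume 0 c := by
    intro c hc
    refine (intervalIntegral.intervalIntegrable_rpow' hr).congr fun z hz => ?_
    rw [uIoc_of_le hc] at hz
    exact (oddPow_of_pos hz.1).symm
  have hzero : ∀ c, IntervalIntegrable (oddPow r) volume 0 c := by
    intro c
    rcases le_total 0 c with hc | hc
    · exact hpos c hc
    · rw [IntervalIntegrable.iff_comp_neg, neg_zero]
      simpa only [oddPow_neg] using! (hpos (-c) (neg_nonneg.2 hc)).neg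
  exact (hzero a).symm.trans (hzero b)

end OddPow

/-- The central difference of `t ↦ t ^ r` with step `1`, divided by `t ^ (1 + 2s)`: the integrand of
`G`, meaningful for `1 ≤ t` only because `Real.rpow` is not the odd power on negative bases. -/
noncomputable def centralDiffQuot (s r t : ℝ) : ℝ :=
  ((t + 1) ^ r - (t - 1) ^ r) / t ^ (1 + 2 * s)

section Profile

variable {s r t X : ℝ}

theorem exists_abs_add_one_rpow_sub_sub_one_rpow_le (r : ℝ) :
    ∃ C, ∀ t : ℝ, 2 ≤ t → |(t + 1) ^ r - (t - 1) ^ r| ≤ C * t ^ (r - 1) := by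
  have hsmooth : ContDiffOn ℝ 1 (fun z : ℝ => z ^ r) (Icc (1 / 2) (3 / 2)) :=
    contDiffOn_id.rpow_const_of_ne fun z hz => by simp only [id]; linarith [hz.1]
  obtain ⟨K, hK⟩ := hsmooth.exists_lipschitzOnWith one_ne_zero (convex_Icc _ _) isCompact_Icc
  refine ⟨K * 2, fun t ht => ?_⟩
  have ht0 : 0 < t := by linarith
  have hinv : 0 < t⁻¹ ∧ t⁻¹ ≤ 1 / 2 := ⟨by positivity, by rw [inv_le_comm₀ ht0] <;> norm_num [ht]⟩
  -- Homogeneity leaves only the Lipschitz constant of `z ^ r` near `z = 1`.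
  have hlip : |(1 + t⁻¹) ^ r - (1 - t⁻¹) ^ r| ≤ K * (2 * t⁻¹) := by
    have := hK.dist_le_mul (1 + t⁻¹) ⟨by linarith, by linarith⟩ (1 - t⁻¹)
      ⟨by linarith, by linarith⟩
    rwa [Real.dist_eq, Real.dist_eq, add_sub_sub_cancel, ← two_mul,
      abs_of_pos (by linarith : 0 < 2 * t⁻¹)] at this
  have hadd : (t + 1) ^ r = t ^ r * (1 + t⁻¹) ^ r := by
    rw [← Real.mul_rpow ht0.le (by linarith), mul_add, mul_inv_cancel₀ ht0.ne', mul_one]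
  have hsub : (t - 1) ^ r = t ^ r * (1 - t⁻¹) ^ r := by
    rw [← Real.mul_rpow ht0.le (by linarith), mul_sub, mul_inv_cancel₀ ht0.ne', mul_one]
  calc |(t + 1) ^ r - (t - 1) ^ r| = t ^ r * |(1 + t⁻¹) ^ r - (1 - t⁻¹) ^ r| := by
        rw [hadd, hsub, ← mul_sub, abs_mul, abs_of_pos (Real.rpow_pos_of_pos ht0 r)]
    _ ≤ t ^ r * (K * (2 * t⁻¹)) := by gcongr
    _ = K * 2 * t ^ (r - 1) := by rw [Real.rpow_sub_one ht0.ne']; ring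

theorem integrableOn_Ioi_two_centralDiffQuot (hr : r < 1 + 2 * s) :
    IntegrableOn (centralDiffQuot s r) (Ioi 2) := by
  obtain ⟨C, hC⟩ := exists_abs_add_one_rpow_sub_sub_one_rpow_le r
  have hpow : IntegrableOn (fun t : ℝ => C * t ^ (r - 1 - (1 + 2 * s))) (Ioi 2) :=
    (integrableOn_Ioi_rpow_of_lt (by linarith) two_pos).const_mul C
  have hmeas : Measurable (centralDiffQuot s r) := by unfold centralDiffQuot; fun_prop
  refine hpow.mono' hmeas.aestronglyMeasurable
    (ae_restrict_of_forall_mem measurableSet_Ioi fun t (ht : 2 < t) => ?_)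
  have ht0 : 0 < t := two_pos.trans ht
  have hpos := Real.rpow_pos_of_pos ht0 (1 + 2 * s)
  rw [centralDiffQuot, Real.norm_eq_abs, abs_div, abs_of_pos hpos, Real.rpow_sub ht0,
    ← mul_div_assoc]
  gcongr
  exact hC t ht.le

theorem secondDiffQuot_oddPow_one (ht : 1 < t) :
    secondDiffQuot s (oddPow r) 1 t = 2 * t ^ (-(1 + 2 * s)) - centralDiffQuot s r t := by
  rw [secondDiffQuot, centralDiffQuot, ← neg_sub t 1, oddPow_neg, oddPow_of_pos one_pos,
    oddPow_of_pos (by linarith), oddPow_of_pos (by linarith), Real.one_rpow,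
    Real.rpow_neg (by linarith), add_comm 1 t]
  ring

theorem integrableOn_Ioi_two_mul_rpow (hs : 0 < s) (hX : 0 < X) :
    IntegrableOn (fun t : ℝ => 2 * t ^ (-(1 + 2 * s))) (Ioi X) :=
  (integrableOn_Ioi_rpow_of_lt (by linarith) hX).const_mul 2

theorem integrableOn_Ioi_secondDiffQuot_oddPow_one_of_pos (hs : 0 < s) (hr0 : -1 < r)
    (hr1 : r < 1 + 2 * s) (hX : 0 < X) :
    IntegrableOn (secondDiffQuot s (oddPow r) 1) (Ioi X) := by
  have hmiddle : IntegrableOn (secondDiffQuot s (oddPow r) 1) (Ioc X 2) :=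
    integrableOn_Ioc_secondDiffQuot_of_intervalIntegrable hX (intervalIntegrable_oddPow hr0)
  have hfar : IntegrableOn (secondDiffQuot s (oddPow r) 1) (Ioi 2) :=
    ((integrableOn_Ioi_two_mul_rpow hs two_pos).sub
      (integrableOn_Ioi_two_centralDiffQuot hr1)).congr_fun
      (fun t ht => (secondDiffQuot_oddPow_one (one_lt_two.trans ht)).symm) measurableSet_Ioi
  exact (hmiddle.union hfar).mono_set Ioi_subset_Ioc_union_Ioi

theorem integrableOn_Ioi_secondDiffQuot_oddPow_one (hs0 : 0 < s) (hs1 : s < 1) (hr0 : -1 < r)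
    (hr1 : r < 1 + 2 * s) : IntegrableOn (secondDiffQuot s (oddPow r) 1) (Ioi 0) := by
  have hnear : IntegrableOn (secondDiffQuot s (oddPow r) 1) (Ioc 0 (1 / 2)) :=
    integrableOn_Ioc_secondDiffQuot_of_contDiffOn hs1 (by norm_num)
      ((contDiffOn_oddPow r).mono fun z hz => lt_of_lt_of_le (by norm_num) hz.1)
  have hfar : IntegrableOn (secondDiffQuot s (oddPow r) 1) (Ioi (1 / 2)) :=
    integrableOn_Ioi_secondDiffQuot_oddPow_one_of_pos hs0 hr0 hr1 (by norm_num)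
  exact (hnear.union hfar).mono_set Ioi_subset_Ioc_union_Ioi

theorem integral_Ioi_secondDiffQuot_oddPow_one (hs : 0 < s) (hr0 : -1 < r)
    (hr1 : r < 1 + 2 * s) (hX : 1 ≤ X) :
    ∫ t in Ioi X, secondDiffQuot s (oddPow r) 1 t =
      X ^ (-(2 * s)) / s - ∫ t in Ioi X, centralDiffQuot s r t := by
  have hX0 : 0 < X := by linarith
  have hpow := integrableOn_Ioi_two_mul_rpow hs hX0
  have hquot := integrableOn_Ioi_secondDiffQuot_oddPow_one_of_pos hs hr0 hr1 hX0
  have hcentral : ∀ t ∈ Ioi X, centralDiffQuot s r t =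
      2 * t ^ (-(1 + 2 * s)) - secondDiffQuot s (oddPow r) 1 t := fun t ht => by
    rw [secondDiffQuot_oddPow_one (hX.trans_lt ht), sub_sub_cancel]
  rw [setIntegral_congr_fun measurableSet_Ioi hcentral, integral_sub hpow hquot, integral_const_mul,
    integral_Ioi_rpow_of_lt (by linarith) hX0, show -(1 + 2 * s) + 1 = -(2 * s) by ring]
  field_simp
  ring

end Profile

section Scaling

variable {s r x t δ : ℝ}

theorem secondDiffQuot_oddPow_eq_rpow_mul (hx : 0 < x) (ht : 0 ≤ t) :
    secondDiffQuot s (oddPow r) x t =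
      x ^ (r - (1 + 2 * s)) * secondDiffQuot s (oddPow r) 1 (t / x) := by
  have hadd : oddPow r (x + t) = x ^ r * oddPow r (1 + t / x) := by
    rw [← oddPow_mul hx, mul_add, mul_one, mul_div_cancel₀ t hx.ne']
  have hsub : oddPow r (x - t) = x ^ r * oddPow r (1 - t / x) := by
    rw [← oddPow_mul hx, mul_sub, mul_one, mul_div_cancel₀ t hx.ne']
  have hself : oddPow r x = x ^ r * oddPow r 1 := by rw [← oddPow_mul hx, mul_one]
  rw [secondDiffQuot, secondDiffQuot, hadd, hsub, hself, Real.div_rpow ht hx.le, Real.rpow_sub hx]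
  field_simp

theorem integrableOn_Ioi_secondDiffQuot_oddPow (hs0 : 0 < s) (hs1 : s < 1) (hr0 : -1 < r)
    (hr1 : r < 1 + 2 * s) (hx : 0 < x) :
    IntegrableOn (secondDiffQuot s (oddPow r) x) (Ioi 0) := by
  have hcomp : IntegrableOn (fun t => secondDiffQuot s (oddPow r) 1 (t / x)) (Ioi 0) := by
    simp only [div_eq_mul_inv]
    rw [integrableOn_Ioi_comp_mul_right_iff _ _ (inv_pos.2 hx), zero_mul]
    exact integrableOn_Ioi_secondDiffQuot_oddPow_one hs0 hs1 hr0 hr1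
  exact IntegrableOn.congr_fun (hcomp.const_mul (x ^ (r - (1 + 2 * s))))
    (fun t ht => (secondDiffQuot_oddPow_eq_rpow_mul hx (le_of_lt ht)).symm) measurableSet_Ioi

theorem integral_secondDiffQuot_oddPow_eq_rpow_mul (hx : 0 < x) (hδ : 0 ≤ δ) :
    ∫ t in (0)..δ, secondDiffQuot s (oddPow r) x t =
      x ^ (r - 2 * s) * ∫ t in (0)..δ / x, secondDiffQuot s (oddPow r) 1 t := by
  have hscale : ∀ t ∈ uIcc 0 δ, secondDiffQuot s (oddPow r) x t =
      x ^ (r - (1 + 2 * s)) * secondDiffQuot s (oddPow r) 1 (t / x) := fun t ht =>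
    secondDiffQuot_oddPow_eq_rpow_mul hx (uIcc_of_le hδ ▸ ht).1
  have hexp : x ^ (r - (1 + 2 * s)) * x = x ^ (r - 2 * s) := by
    rw [← Real.rpow_add_one hx.ne']
    ring_nf
  rw [intervalIntegral.integral_congr hscale, intervalIntegral.integral_const_mul,
    intervalIntegral.integral_comp_div _ hx.ne', zero_div, smul_eq_mul, ← mul_assoc, hexp]

theorem integral_secondDiffQuot_oddPow_of_le (hs0 : 0 < s) (hs1 : s < 1) (hr0 : -1 < r)
    (hr1 : r < 1 + 2 * s) (hx : 0 < x) (hδ : x ≤ δ) :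
    ∫ t in (0)..δ, secondDiffQuot s (oddPow r) x t =
      (∫ t in Ioi 0, secondDiffQuot s (oddPow r) 1 t) * x ^ (r - 2 * s)
        - δ ^ (-(2 * s)) / s * x ^ r
        + x ^ (r - 2 * s) * ∫ t in Ioi (δ / x), centralDiffQuot s r t := by
  have hδ0 : 0 < δ := hx.trans_le hδ
  have hX : 1 ≤ δ / x := (one_le_div₀ hx).2 hδ
  have hint := integrableOn_Ioi_secondDiffQuot_oddPow_one hs0 hs1 hr0 hr1
  have hsplit := intervalIntegral.integral_interval_add_Ioi hint
    (hint.mono_set (Ioi_subset_Ioi (zero_le_one.trans hX)))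
  rw [integral_Ioi_secondDiffQuot_oddPow_one hs0 hr0 hr1 hX] at hsplit
  have hpow : x ^ (r - 2 * s) * (δ / x) ^ (-(2 * s)) = δ ^ (-(2 * s)) * x ^ r := by
    rw [Real.div_rpow hδ0.le hx.le, mul_div_left_comm, ← Real.rpow_sub hx]
    ring_nf
  rw [integral_secondDiffQuot_oddPow_eq_rpow_mul hx hδ0.le, ← hsplit]
  linear_combination (-1 / s) * hpow

end Scaling

section LocallyOddPow

variable {s r x δ : ℝ} {u : ℝ → ℝ}

theorem secondDiffQuot_ae_eq_of_eq_oddPow (hx : 0 < x) (hδ : 0 ≤ δ)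
    (hu : ∀ y ∈ Icc (x - δ) (x + δ), y ≠ 0 → u y = oddPow r y) :
    secondDiffQuot s u x =ᵐ[volume.restrict (Ioc 0 δ)] secondDiffQuot s (oddPow r) x := by
  filter_upwards [ae_restrict_mem measurableSet_Ioc, Measure.ae_ne _ x] with t ht htx
  rw [secondDiffQuot, secondDiffQuot, hu x ⟨by linarith, by linarith⟩ hx.ne',
    hu (x + t) ⟨by linarith [ht.1], by linarith [ht.2]⟩ (by linarith [ht.1]),
    hu (x - t) ⟨by linarith [ht.2], by linarith [ht.1]⟩ (sub_ne_zero.2 htx.symm)]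

theorem hasFracLapAt_of_eq_oddPow (hs0 : 0 < s) (hs1 : s < 1) (hr0 : -1 < r)
    (hr1 : r < 1 + 2 * s) (hu : Integrable fun y => u y / (1 + |y|) ^ (1 + 2 * s))
    (hx : 0 < x) (hδ : x ≤ δ) (hodd : ∀ y ∈ Icc (x - δ) (x + δ), y ≠ 0 → u y = oddPow r y) :
    HasFracLapAt s u x (fracLapCoef s *
      ((∫ t in Ioi 0, secondDiffQuot s (oddPow r) 1 t) * x ^ (r - 2 * s)
        - δ ^ (-(2 * s)) / s * x ^ r
        + x ^ (r - 2 * s) * (∫ t in Ioi (δ / x), centralDiffQuot s r t)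
        - ∫ y in {y : ℝ | δ ≤ |y|}, (u (x + y) - u x) / |y| ^ (1 + 2 * s))) := by
  have hδ0 : 0 < δ := hx.trans_le hδ
  have hae : secondDiffQuot s u x =ᵐ[volume.restrict (Ioc 0 δ)] secondDiffQuot s (oddPow r) x :=
    secondDiffQuot_ae_eq_of_eq_oddPow hx hδ0.le hodd
  have hnear : IntegrableOn (secondDiffQuot s u x) (Ioc 0 δ) :=
    ((integrableOn_Ioi_secondDiffQuot_oddPow hs0 hs1 hr0 hr1 hx).mono_set
      Ioc_subset_Ioi_self).congr hae.symm
  have hintegral : ∫ t in (0)..δ, secondDiffQuot s u x t =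
      ∫ t in (0)..δ, secondDiffQuot s (oddPow r) x t := by
    rw [intervalIntegral.integral_of_le hδ0.le, intervalIntegral.integral_of_le hδ0.le,
      integral_congr_ae hae]
  rw [← integral_secondDiffQuot_oddPow_of_le hs0 hs1 hr0 hr1 hx hδ, ← hintegral]
  exact hasFracLapAt_of_integrableOn_secondDiffQuot hδ0
    (fun ε hε => integrableOn_fracLapIntegrand hs0 hu x hε) hnear

end LocallyOddPow

theorem stmt5_general (s r : ℝ) (hs0 : 0 < s) (hs1 : s < 1) (hr0 : -1 < r) (hr1 : r < 1 + 2 * s) :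
    ∃ c₁ c₂ : ℝ, ∀ v : ℝ → ℝ, (Integrable fun y => v y / (1 + |y|) ^ (1 + 2 * s)) →
      (∀ x : ℝ, -1 ≤ x → x < 0 → v x = -(|x| ^ r)) →
      (∀ x : ℝ, 0 < x → x ≤ 1 → v x = x ^ r) →
      ∀ x ∈ Set.Ioc (0 : ℝ) (1 / 2),
        HasFracLapAt s v x
          (c₁ * x ^ (r - 2 * s) + c₂ * x ^ r
            + fracLapCoef s *
              (x ^ (r - 2 * s) *
                ∫ t in Set.Ioi (1 / (2 * x)), ((t + 1) ^ r - (t - 1) ^ r) / t ^ (1 + 2 * s))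
            - fracLapCoef s *
              ∫ y in {y : ℝ | 1 / 2 ≤ |y|}, (v (x + y) - v x) / |y| ^ (1 + 2 * s)) := by
  refine ⟨fracLapCoef s * ∫ t in Ioi 0, secondDiffQuot s (oddPow r) 1 t,
    -(fracLapCoef s * ((1 / 2) ^ (-(2 * s)) / s)), fun v hv hneg hpos x hx => ?_⟩
  have hodd : ∀ y ∈ Icc (x - 1 / 2) (x + 1 / 2), y ≠ 0 → v y = oddPow r y := by
    intro y hy hy0
    rcases hy0.lt_or_gt with hlt | hgt
    · rw [hneg y (by linarith [hy.1, hx.1]) hlt, abs_of_neg hlt, ← neg_neg y, oddPow_neg, neg_neg,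
        oddPow_of_pos (neg_pos.2 hlt)]
    · rw [hpos y hgt (by linarith [hy.2, hx.2]), oddPow_of_pos hgt]
  convert hasFracLapAt_of_eq_oddPow hs0 hs1 hr0 hr1 hv hx.1 hx.2 hodd using 1
  simp only [centralDiffQuot, div_div]
  ring

theorem stmt5 (s r : ℝ) (hs0 : 0 < s) (hs1 : s < 1) (hr0 : 0 < r) (hr1 : r < 1 + 2 * s) :
    ∃ c₁ c₂ : ℝ, ∀ v : ℝ → ℝ, Measurable v → (∃ M : ℝ, ∀ x : ℝ, |v x| ≤ M) →
      (∀ x : ℝ, -1 ≤ x → x < 0 → v x = -(|x| ^ r)) →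
      (∀ x : ℝ, 0 ≤ x → x ≤ 1 → v x = x ^ r) →
      ∀ x ∈ Set.Ioc (0 : ℝ) (1 / 2),
        HasFracLapAt s v x
          (c₁ * x ^ (r - 2 * s) + c₂ * x ^ r
            + fracLapCoef s *
              (x ^ (r - 2 * s) *
                ∫ t in Set.Ioi (1 / (2 * x)), ((t + 1) ^ r - (t - 1) ^ r) / t ^ (1 + 2 * s))
            - fracLapCoef s *
              ∫ y in {y : ℝ | 1 / 2 ≤ |y|}, (v (x + y) - v x) / |y| ^ (1 + 2 * s)) := by
  obtain ⟨c₁, c₂, hc⟩ := stmt5_general s r hs0 hs1 (by linarith) hr1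
  exact ⟨c₁, c₂, fun v hv ⟨_, hM⟩ hneg hpos =>
    hc v (integrable_div_one_add_abs_rpow_of_bounded (by linarith) hv.aestronglyMeasurable hM) hneg
      fun x hx => hpos x hx.le⟩
end

section
/- Let 0<s<1 and β>0 with 2s = 1-β, and define u:ℝ→ℝ by u(x) = |x| for |x| ≤ 1 and u(x) = 1 for |x| > 1. Then there exists a measurable function f:ℝ→ℝ whose restriction to [0,1/2] belongs to C^β([0,1/2]) such that (-Δ)^s u(x) = f(u(x)) for all x ∈ [-1/2, 1/2]. -/
open MeasureTheory Filter Set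

/-! A bounded `a`-Hölder function `u` with `2s < a` has an absolutely convergent fractional
Laplacian. The increments `u(x) - u(x - z)` and `u(y) - u(y - z)` differ by `O(min(|z|, |x - y|)ᵃ)`,
and integrating this against `|z|^(-1-2s)` shows that `(-Δ)^s u` is `(a - 2s)`-Hölder. For
`u = min(|·|, 1)` this is exponent `1 - 2s = β`; moreover `(-Δ)^s u` inherits evenness from `u`, so
`(-Δ)^s u(x) = (-Δ)^s u(|x|) = (-Δ)^s u(u(x))` for `|x| ≤ 1`, and `f = (-Δ)^s u` works. -/

open scoped NNReal Topology

section Holder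

theorem holderWith_of_dist_le {X Y : Type*} [PseudoMetricSpace X] [PseudoMetricSpace Y]
    {C r : ℝ≥0} {f : X → Y} (h : ∀ x y, dist (f x) (f y) ≤ C * dist x y ^ (r : ℝ)) :
    HolderWith C r f := by
  intro x y
  rw [edist_dist, edist_dist, ENNReal.ofReal_rpow_of_nonneg dist_nonneg r.coe_nonneg,
    ← ENNReal.ofReal_coe_nnreal, ← ENNReal.ofReal_mul C.coe_nonneg]
  exact ENNReal.ofReal_le_ofReal (h x y)

variable {E F : Type*} [SeminormedAddCommGroup E] [SeminormedAddCommGroup F] {C r : ℝ≥0}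
  {f : E → F}

theorem norm_sub_le_max_mul_min_rpow (hf : HolderWith C r f) {M : ℝ}
    (hM : ∀ x y, dist (f x) (f y) ≤ M) (x z : E) :
    ‖f x - f (x - z)‖ ≤ max (C : ℝ) M * min ‖z‖ 1 ^ (r : ℝ) := by
  rw [← dist_eq_norm]
  rcases le_total ‖z‖ 1 with hz | hz
  · calc dist (f x) (f (x - z)) ≤ C * ‖z‖ ^ (r : ℝ) := by simpa using hf.dist_le x (x - z)
      _ ≤ max (C : ℝ) M * min ‖z‖ 1 ^ (r : ℝ) := by
        rw [min_eq_left hz]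
        gcongr
        exact le_max_left _ _
  · simpa [min_eq_right hz] using Or.inr (hM x (x - z))

theorem norm_increment_sub_increment_le (hf : HolderWith C r f) (x y z : E) :
    ‖(f x - f (x - z)) - (f y - f (y - z))‖ ≤ 2 * C * min ‖z‖ ‖x - y‖ ^ (r : ℝ) := by
  rw [mul_assoc, two_mul]
  rcases le_total ‖z‖ ‖x - y‖ with h | h
  · rw [min_eq_left h]
    refine (norm_sub_le _ _).trans (add_le_add ?_ ?_)
    · simpa [dist_eq_norm] using hf.dist_le x (x - z)
    · simpa [dist_eq_norm] using hf.dist_le y (y - z)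
  · rw [min_eq_right h, sub_sub_sub_comm]
    refine (norm_sub_le _ _).trans (add_le_add ?_ ?_)
    · simpa [dist_eq_norm] using hf.dist_le x y
    · simpa [dist_eq_norm] using hf.dist_le (x - z) (y - z)

end Holder

theorem memCalpha_iff_of_lt_one {β : ℝ} (hβ0 : 0 < β) (hβ1 : β < 1) {Ω : Set ℝ} {f : ℝ → ℝ} :
    MemCalpha β Ω f ↔
      (∃ D, ∀ x ∈ Ω, |f x| ≤ D) ∧ ∃ C : ℝ≥0, HolderOnWith C β.toNNReal f Ω := by
  have hfloor : ⌊β⌋₊ = 0 := Nat.floor_eq_zero.2 hβ1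
  simp only [MemCalpha, hfloor, Nat.cast_zero, contDiffOn_zero, nonpos_iff_eq_zero, forall_eq,
    iteratedDerivWithin_zero, sub_zero, and_iff_right_iff_imp]
  rintro ⟨-, C, hC⟩
  exact hC.continuousOn (Real.toNNReal_pos.2 hβ0)

theorem apply_abs_of_even {α β : Type*} [AddGroup α] [LinearOrder α] {f : α → β}
    (hf : Function.Even f) (x : α) : f |x| = f x := by
  rcases abs_choice x with h | h <;> simp only [h, hf x]

theorem integrable_comp_abs {E : Type*} [NormedAddCommGroup E] {f : ℝ → E}
    (hf : IntegrableOn f (Ioi 0)) : Integrable (fun z : ℝ => f |z|) := by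
  have hpos : IntegrableOn (fun z : ℝ => f |z|) (Ioi 0) :=
    hf.congr_fun (fun z hz => by rw [abs_of_pos hz]) measurableSet_Ioi
  have hneg : IntegrableOn (fun z : ℝ => f |z|) (Iic 0) := by
    have hpos' : IntegrableOn (fun z : ℝ => f |z|) (Ici (-0)) := by
      rwa [neg_zero, integrableOn_Ici_iff_integrableOn_Ioi]
    simpa only [abs_neg] using hpos'.comp_neg_Iic
  rw [← integrableOn_univ, ← Iic_union_Ioi (a := (0 : ℝ))]
  exact hneg.union hpos

theorem aecover_lt_dist {X : Type*} [MetricSpace X] [MeasurableSpace X] [OpensMeasurableSpace X]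
    (μ : Measure X) [NullSingletonClass μ] (x : X) :
    AECover μ (𝓝[>] (0 : ℝ)) (fun ε => {y | ε < dist y x}) where
  ae_eventually_mem := by
    filter_upwards [Measure.ae_ne μ x] with y hy
    exact nhdsWithin_le_nhds (eventually_lt_nhds (dist_pos.2 hy))
  measurableSet _ := (isOpen_lt continuous_const (by fun_prop)).measurableSet

/-- The radial profile `min(r, h)ᵃ / r^(1+2s)`. It dominates, up to constants, the integrand of
`(-Δ)^s u(x)` for a bounded `a`-Hölder `u` when `h = 1`, and the difference of the integrands at
`x` and `y` when `h = |x - y|`. -/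
noncomputable def truncKernel (a s h r : ℝ) : ℝ := min r h ^ a / r ^ (1 + 2 * s)

section TruncKernel

variable {a s h : ℝ}

theorem truncKernel_of_le {r : ℝ} (hr : 0 < r) (hrh : r ≤ h) :
    truncKernel a s h r = r ^ (a - 2 * s - 1) := by
  rw [truncKernel, min_eq_left hrh, ← Real.rpow_sub hr]
  ring_nf

theorem truncKernel_of_ge {r : ℝ} (hr : 0 < r) (hhr : h ≤ r) :
    truncKernel a s h r = h ^ a * r ^ (-2 * s - 1) := by
  rw [truncKernel, min_eq_right hhr, div_eq_mul_inv, ← Real.rpow_neg hr.le]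
  ring_nf

theorem integrableOn_Ioc_truncKernel (hh : 0 < h) (hsa : 2 * s < a) :
    IntegrableOn (truncKernel a s h) (Ioc 0 h) := by
  have hpow : IntegrableOn (fun r : ℝ => r ^ (a - 2 * s - 1)) (Ioc 0 h) :=
    (intervalIntegrable_iff_integrableOn_Ioc_of_le hh.le).1
      (intervalIntegral.intervalIntegrable_rpow' (by linarith))
  exact hpow.congr_fun (fun r hr => (truncKernel_of_le hr.1 hr.2).symm) measurableSet_Ioc

theorem integrableOn_Ioi_truncKernel (hh : 0 < h) (hs : 0 < s) :
    IntegrableOn (truncKernel a s h) (Ioi h) := by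
  have hpow : IntegrableOn (fun r : ℝ => h ^ a * r ^ (-2 * s - 1)) (Ioi h) :=
    (integrableOn_Ioi_rpow_of_lt (by linarith) hh).const_mul _
  exact hpow.congr_fun (fun r hr => (truncKernel_of_ge (hh.trans hr) (le_of_lt hr)).symm)
    measurableSet_Ioi

theorem integrable_truncKernel_abs (hh : 0 < h) (hs : 0 < s) (hsa : 2 * s < a) :
    Integrable (fun z : ℝ => truncKernel a s h |z|) := by
  apply integrable_comp_abs
  rw [← Ioc_union_Ioi_eq_Ioi hh.le]
  exact (integrableOn_Ioc_truncKernel hh hsa).union (integrableOn_Ioi_truncKernel hh hs)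

theorem setIntegral_Ioc_truncKernel (hh : 0 < h) (hsa : 2 * s < a) :
    ∫ r in Ioc 0 h, truncKernel a s h r = h ^ (a - 2 * s) / (a - 2 * s) := by
  rw [setIntegral_congr_fun measurableSet_Ioc fun r hr => truncKernel_of_le hr.1 hr.2,
    ← intervalIntegral.integral_of_le hh.le, integral_rpow (.inl (by linarith)), sub_add_cancel,
    Real.zero_rpow (by linarith), sub_zero]

theorem setIntegral_Ioi_truncKernel (hh : 0 < h) (hs : 0 < s) :
    ∫ r in Ioi h, truncKernel a s h r = h ^ (a - 2 * s) / (2 * s) := by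
  rw [setIntegral_congr_fun measurableSet_Ioi fun r hr =>
      truncKernel_of_ge (hh.trans hr) (le_of_lt hr),
    integral_const_mul, integral_Ioi_rpow_of_lt (by linarith) hh, sub_add_cancel, neg_mul,
    neg_div_neg_eq, mul_div_assoc', ← Real.rpow_add hh, ← sub_eq_add_neg]

theorem integral_truncKernel_abs (hh : 0 < h) (hs : 0 < s) (hsa : 2 * s < a) :
    ∫ z : ℝ, truncKernel a s h |z| = 2 * (1 / (a - 2 * s) + 1 / (2 * s)) * h ^ (a - 2 * s) := by
  rw [integral_comp_abs, ← Ioc_union_Ioi_eq_Ioi hh.le,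
    setIntegral_union (Ioc_disjoint_Ioi le_rfl) measurableSet_Ioi
      (integrableOn_Ioc_truncKernel hh hsa) (integrableOn_Ioi_truncKernel hh hs),
    setIntegral_Ioc_truncKernel hh hsa, setIntegral_Ioi_truncKernel hh hs]
  ring

end TruncKernel

/-- The fractional Laplacian `(-Δ)^s u` as an ordinary (not principal value) integral, meaningful
where the integrand is absolutely integrable; elsewhere it takes the junk value `0`. -/
noncomputable def fracLap (s : ℝ) (u : ℝ → ℝ) (x : ℝ) : ℝ :=
  fracLapCoef s * ∫ y, (u x - u y) / |x - y| ^ (1 + 2 * s)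

section FracLap

variable {s : ℝ} {u : ℝ → ℝ}

theorem hasFracLapAt_fracLap {x : ℝ}
    (h : Integrable (fun y => (u x - u y) / |x - y| ^ (1 + 2 * s))) :
    HasFracLapAt s u x (fracLap s u x) :=
  ⟨fun _ _ => h.integrableOn, ((aecover_lt_dist volume x).integral_tendsto_of_countably_generated
    h).const_mul _⟩

theorem fracLap_eq_integral_increment (s : ℝ) (u : ℝ → ℝ) (x : ℝ) :
    fracLap s u x = fracLapCoef s * ∫ z, (u x - u (x - z)) / |z| ^ (1 + 2 * s) := by
  rw [fracLap, ← integral_sub_left_eq_self _ volume x]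
  simp only [sub_sub_cancel]

theorem fracLap_even (hu : Function.Even u) : Function.Even (fracLap s u) := by
  intro x
  rw [fracLap, fracLap, ← integral_neg_eq_self]
  simp only [hu _, neg_sub_neg, abs_sub_comm]

variable {C a : ℝ≥0}

theorem integrable_increment_div_abs_rpow (hs : 0 < s) (hsa : 2 * s < a) (hu : HolderWith C a u)
    (hbdd : Bornology.IsBounded (range u)) (x : ℝ) :
    Integrable (fun z => (u x - u (x - z)) / |z| ^ (1 + 2 * s)) := by
  obtain ⟨M, hM⟩ := Metric.isBounded_range_iff.1 hbdd
  have ha : 0 < a := NNReal.coe_pos.1 (by linarith)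
  have hmeas : Measurable u := (hu.continuous ha).measurable
  refine ((integrable_truncKernel_abs one_pos hs hsa).const_mul (max (C : ℝ) M)).mono'
    (Measurable.aestronglyMeasurable (by fun_prop)) (.of_forall fun z => ?_)
  rw [norm_div, Real.norm_of_nonneg (by positivity : 0 ≤ |z| ^ (1 + 2 * s)), truncKernel,
    ← mul_div_assoc]
  gcongr
  exact norm_sub_le_max_mul_min_rpow hu hM x z

theorem hasFracLapAt_of_holderWith (hs : 0 < s) (hsa : 2 * s < a) (hu : HolderWith C a u)
    (hbdd : Bornology.IsBounded (range u)) (x : ℝ) : HasFracLapAt s u x (fracLap s u x) := by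
  apply hasFracLapAt_fracLap
  simpa only [sub_sub_cancel] using
    (integrable_increment_div_abs_rpow hs hsa hu hbdd x).comp_sub_left x

theorem abs_fracLap_sub_fracLap_le (hs : 0 < s) (hsa : 2 * s < a) (hu : HolderWith C a u)
    (hbdd : Bornology.IsBounded (range u)) (x y : ℝ) :
    |fracLap s u x - fracLap s u y| ≤
      |fracLapCoef s| * (4 * C * (1 / (a - 2 * s) + 1 / (2 * s))) * |x - y| ^ (a - 2 * s) := by
  rcases eq_or_ne x y with rfl | hxy
  · simp [Real.zero_rpow (sub_pos.2 hsa).ne']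
  have hh : 0 < |x - y| := abs_pos.2 (sub_ne_zero.2 hxy)
  have hpointwise (z : ℝ) :
      ‖(u x - u (x - z)) / |z| ^ (1 + 2 * s) - (u y - u (y - z)) / |z| ^ (1 + 2 * s)‖ ≤
        2 * C * truncKernel a s |x - y| |z| := by
    rw [← sub_div, norm_div, Real.norm_of_nonneg (by positivity : 0 ≤ |z| ^ (1 + 2 * s)),
      truncKernel, ← mul_div_assoc]
    gcongr
    exact norm_increment_sub_increment_le hu x y z
  rw [fracLap_eq_integral_increment, fracLap_eq_integral_increment, ← mul_sub, abs_mul,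
    ← integral_sub (integrable_increment_div_abs_rpow hs hsa hu hbdd x)
      (integrable_increment_div_abs_rpow hs hsa hu hbdd y), mul_assoc]
  gcongr
  calc _ ≤ ∫ z, 2 * C * truncKernel a s |x - y| |z| :=
        norm_integral_le_of_norm_le ((integrable_truncKernel_abs hh hs hsa).const_mul _)
          (.of_forall hpointwise)
    _ = 4 * C * (1 / (a - 2 * s) + 1 / (2 * s)) * |x - y| ^ (a - 2 * s) := by
        rw [integral_const_mul, integral_truncKernel_abs hh hs hsa]
        ring

theorem exists_holderWith_fracLap (hs : 0 < s) (hsa : 2 * s < a) (hu : HolderWith C a u)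
    (hbdd : Bornology.IsBounded (range u)) :
    ∃ D : ℝ≥0, HolderWith D (a - 2 * s).toNNReal (fracLap s u) := by
  have hsub : 0 < a - 2 * s := sub_pos.2 hsa
  refine ⟨⟨|fracLapCoef s| * (4 * C * (1 / (a - 2 * s) + 1 / (2 * s))), by positivity⟩,
    holderWith_of_dist_le fun x y => ?_⟩
  rw [Real.coe_toNNReal _ hsub.le]
  exact abs_fracLap_sub_fracLap_le hs hsa hu hbdd x y

end FracLap

section MinAbs

theorem eq_min_abs_one {u : ℝ → ℝ} (hle : ∀ x, |x| ≤ 1 → u x = |x|)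
    (hgt : ∀ x, 1 < |x| → u x = 1) : u = fun x => min |x| 1 := by
  ext x
  rcases le_or_gt |x| 1 with hx | hx
  · rw [hle x hx, min_eq_left hx]
  · rw [hgt x hx, min_eq_right hx.le]

theorem holderWith_min_abs (c : ℝ) : HolderWith 1 1 (fun x : ℝ => min |x| c) :=
  (lipschitzWith_one_norm.min_const c).holderWith

theorem isBounded_range_min_abs (c : ℝ) : Bornology.IsBounded (range fun x : ℝ => min |x| c) :=
  (Metric.isBounded_Icc (min 0 c) c).subset <| range_subset_iff.2 fun x =>
    ⟨min_le_min_right c (abs_nonneg x), min_le_right _ _⟩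

theorem even_min_abs (c : ℝ) : Function.Even (fun x : ℝ => min |x| c) := fun x => by
  simp only [abs_neg]

end MinAbs

theorem stmt9 (s β : ℝ) (hs0 : 0 < s) (hs1 : s < 1) (hβ0 : 0 < β) (h : 2 * s = 1 - β)
    (u : ℝ → ℝ)
    (hu1 : ∀ x : ℝ, |x| ≤ 1 → u x = |x|)
    (hu2 : ∀ x : ℝ, 1 < |x| → u x = 1) :
    ∃ f : ℝ → ℝ, Measurable f ∧
      MemCalpha β (Set.Icc 0 (1 / 2)) f ∧
      ∀ x ∈ Set.Icc (-(1 / 2) : ℝ) (1 / 2), HasFracLapAt s u x (f (u x)) := by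
  have hu := eq_min_abs_one hu1 hu2
  have hholder : HolderWith 1 1 u := hu ▸ holderWith_min_abs 1
  have hbdd : Bornology.IsBounded (range u) := hu ▸ isBounded_range_min_abs 1
  have heven : Function.Even u := hu ▸ even_min_abs 1
  have hs : 2 * s < (1 : ℝ≥0) := by rw [NNReal.coe_one]; linarith
  obtain ⟨C, hC⟩ := exists_holderWith_fracLap hs0 hs hholder hbdd
  rw [NNReal.coe_one, show 1 - 2 * s = β by linarith] at hC
  have hcont : Continuous (fracLap s u) := hC.continuous (Real.toNNReal_pos.2 hβ0)
  refine ⟨fracLap s u, hcont.measurable,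
    (memCalpha_iff_of_lt_one hβ0 (by linarith)).2
      ⟨isCompact_Icc.exists_bound_of_continuousOn hcont.continuousOn, C, hC.holderOnWith _⟩,
    fun x hx => ?_⟩
  have hx1 : |x| ≤ 1 := abs_le.2 ⟨by linarith [hx.1], by linarith [hx.2]⟩
  rw [hu1 x hx1, apply_abs_of_even (fracLap_even heven)]
  exact hasFracLapAt_of_holderWith hs0 hs hholder hbdd x
end
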